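/- arXiv:1006.5636 — 4 statements merged into one kernel-verified Lean document; each statement's English description precedes it below -/
import Mathlib

section
/- Let L be a finite-dimensional Lie algebra over a field F, let M be a maximal subalgebra of L, and let C and D be ideal completions of M in L. Then the quotient Lie algebras C/k(C) and D/k(D) are isomorphic. -/
/-- The strict core `k(B)` of a subalgebra `B` of `L`: the sum of all ideals of `L` that are
proper subalgebras of `B`. -/
def strictCore {F L : Type*} [Field F] [LieRing L] [LieAlgebra F L]
    (B : LieSubalgebra F L) : LieIdeal F L :=
  sSup {I : LieIdeal F L | (I : LieSubalgebra F L) < B}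

/-- `C` is a completion of the maximal subalgebra `M` of `L` if `C` is not contained in `M`
but every proper subalgebra of `C` that is an ideal of `L` is contained in `M`.
The set of completions of `M` is the index complex `I(M)`. -/
def IsCompletion {F L : Type*} [Field F] [LieRing L] [LieAlgebra F L]
    (M C : LieSubalgebra F L) : Prop :=
  ¬ C ≤ M ∧ ∀ I : LieIdeal F L, (I : LieSubalgebra F L) < C → (I : LieSubalgebra F L) ≤ M

/-- A maximal completion of `M`: a maximal element of the index complex `I(M)` under inclusion. -/
def IsMaxCompletion {F L : Type*} [Field F] [LieRing L] [LieAlgebra F L]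
    (M C : LieSubalgebra F L) : Prop :=
  IsCompletion M C ∧ ∀ D : LieSubalgebra F L, IsCompletion M D → C ≤ D → C = D

/-- The quotient of a subalgebra `C` of `L` by (the pullback along the inclusion of) an ideal
`K` of `L`. -/
abbrev quotIn {F L : Type*} [Field F] [LieRing L] [LieAlgebra F L]
    (C : LieSubalgebra F L) (K : LieIdeal F L) : Type _ :=
  C ⧸ LieIdeal.comap C.incl K

/-- The quotient Lie algebra `C / k(C)`. -/
abbrev quotCore {F L : Type*} [Field F] [LieRing L] [LieAlgebra F L]
    (C : LieSubalgebra F L) : Type _ :=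
  quotIn C (strictCore C)

/-- The largest ideal of `L` contained in the subalgebra `B`, denoted `B_L`. -/
def idealCore {F L : Type*} [Field F] [LieRing L] [LieAlgebra F L]
    (B : LieSubalgebra F L) : LieIdeal F L :=
  sSup {I : LieIdeal F L | (I : LieSubalgebra F L) ≤ B}

/-- A subalgebra `B` of `L` is a c-ideal of `L` if there is an ideal `C` of `L` such that
`L = B + C` and `B ∩ C ≤ B_L`. -/
def IsCIdeal {F L : Type*} [Field F] [LieRing L] [LieAlgebra F L]
    (B : LieSubalgebra F L) : Prop :=
  ∃ C : LieIdeal F L, B ⊔ (C : LieSubalgebra F L) = ⊤ ∧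
    B ⊓ (C : LieSubalgebra F L) ≤ (idealCore B : LieSubalgebra F L)

/-- A Lie algebra is supersolvable if it has a chain of ideals
`0 = I_0 ⊆ I_1 ⊆ ... ⊆ I_n = L` with `dim I_j = j` for each `j`. -/
def IsSupersolvableLieAlgebra (F L : Type*) [Field F] [LieRing L] [LieAlgebra F L] : Prop :=
  ∃ (n : ℕ) (I : Fin (n + 1) → LieIdeal F L), I 0 = ⊥ ∧ I (Fin.last n) = ⊤ ∧
    Monotone I ∧ ∀ j : Fin (n + 1), Module.finrank F (I j) = (j : ℕ)

/-- The natural quotient map `L → L ⧸ B` as a morphism of Lie algebras. -/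
def lieQuotMk {F L : Type*} [Field F] [LieRing L] [LieAlgebra F L] (B : LieIdeal F L) :
    L →ₗ⁅F⁆ L ⧸ B :=
  { (LieSubmodule.Quotient.mk' B).toLinearMap with
    map_lie' := rfl }

/-- A subalgebra `C` of `L` is a subideal of `L` if there is a chain of subalgebras
`C = C_0 ⊆ C_1 ⊆ ... ⊆ C_n = L` in which each `C_i` is an ideal of `C_{i+1}`. -/
def IsSubideal {F L : Type*} [Field F] [LieRing L] [LieAlgebra F L]
    (C : LieSubalgebra F L) : Prop :=
  ∃ (n : ℕ) (f : Fin (n + 1) → LieSubalgebra F L), f 0 = C ∧ f (Fin.last n) = ⊤ ∧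
    ∀ i : Fin n, f i.castSucc ≤ f i.succ ∧
      ∀ x ∈ f i.succ, ∀ y ∈ f i.castSucc, ⁅x, y⁆ ∈ f i.castSucc

/-- The Frattini subalgebra: the intersection of all maximal subalgebras of `L`. -/
def frattiniSubalgebra (F L : Type*) [Field F] [LieRing L] [LieAlgebra F L] :
    LieSubalgebra F L :=
  sInf {M : LieSubalgebra F L | IsCoatom M}

/-- The Frattini ideal: the largest ideal of `L` contained in the Frattini subalgebra. -/
def frattiniIdeal (F L : Type*) [Field F] [LieRing L] [LieAlgebra F L] : LieIdeal F L :=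
  idealCore (frattiniSubalgebra F L)

/-!
If `C = D` there is nothing to prove. Otherwise `C ∩ D ≤ M`, and `L = M + C = M + D` by maximality
of `M`. Both `M` and `C` normalize `M ∩ D`, so it is an ideal of `L`, whence `k(D) = M ∩ D`;
likewise `k(C) = M ∩ C`. Now `C` and `M ∩ (C + D)` have the same sum `C + D` with the ideal
`k(C) + D`, and they meet it in `k(C)` and `k(C) + k(D)`, so by the second isomorphism theorem
`C / k(C) ≅ (M ∩ (C + D)) / (k(C) + k(D))`. The right-hand side is symmetric in `C` and `D`.
-/

section CommRing

variable {R L : Type*} [CommRing R] [LieRing L] [LieAlgebra R L]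

/-- The restriction to the subalgebra `A` of the projection `L → L ⧸ K`. It has kernel `A ∩ K` and
range `(A + K) / K`, which yields the second isomorphism theorem. -/
def restrictQuotientMk (A : LieSubalgebra R L) (K : LieIdeal R L) : A →ₗ⁅R⁆ L ⧸ K :=
  { K.toSubmodule.mkQ ∘ₗ A.toSubmodule.subtype with map_lie' := rfl }

theorem ker_restrictQuotientMk (A : LieSubalgebra R L) (K : LieIdeal R L) :
    (restrictQuotientMk A K).ker = LieIdeal.comap A.incl K := by
  ext x
  exact Submodule.Quotient.mk_eq_zero K.toSubmodule

theorem toSubmodule_range_restrictQuotientMk (A : LieSubalgebra R L) (K : LieIdeal R L) :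
    (restrictQuotientMk A K).range.toSubmodule =
      (A.toSubmodule ⊔ K.toSubmodule).map K.toSubmodule.mkQ := by
  rw [Submodule.map_sup, Submodule.mkQ_map_self, sup_bot_eq]
  exact (LinearMap.range_comp _ _).trans (congrArg _ A.toSubmodule.range_subtype)

theorem comap_incl_eq_comap_incl_iff {A : LieSubalgebra R L} {I K : LieIdeal R L} :
    LieIdeal.comap A.incl I = LieIdeal.comap A.incl K ↔
      A.toSubmodule ⊓ I.toSubmodule = A.toSubmodule ⊓ K.toSubmodule := by
  simp only [SetLike.ext_iff, LieIdeal.mem_comap, LieSubalgebra.coe_incl, Subtype.forall,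
    Submodule.mem_inf, LieSubalgebra.mem_toSubmodule, LieSubmodule.mem_toSubmodule,
    and_congr_right_iff]

theorem nonempty_quotient_equiv_of_sup_eq {A B : LieSubalgebra R L} {I J K : LieIdeal R L}
    (hAI : A.toSubmodule ⊓ I.toSubmodule = A.toSubmodule ⊓ K.toSubmodule)
    (hBJ : B.toSubmodule ⊓ J.toSubmodule = B.toSubmodule ⊓ K.toSubmodule)
    (hAB : A.toSubmodule ⊔ K.toSubmodule = B.toSubmodule ⊔ K.toSubmodule) :
    Nonempty ((A ⧸ LieIdeal.comap A.incl I) ≃ₗ⁅R⁆ B ⧸ LieIdeal.comap B.incl J) := by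
  have hrange : (restrictQuotientMk A K).range = (restrictQuotientMk B K).range := by
    rw [← LieSubalgebra.toSubmodule_inj, toSubmodule_range_restrictQuotientMk, hAB,
      toSubmodule_range_restrictQuotientMk]
  rw [comap_incl_eq_comap_incl_iff.2 hAI, comap_incl_eq_comap_incl_iff.2 hBJ,
    ← ker_restrictQuotientMk, ← ker_restrictQuotientMk]
  exact ⟨(restrictQuotientMk A K).quotKerEquivRange.trans <|
    (LieEquiv.ofEq _ _ (congrArg _ hrange)).trans (restrictQuotientMk B K).quotKerEquivRange.symm⟩

theorem toSubmodule_sup_toLieSubalgebra (A : LieSubalgebra R L) (K : LieIdeal R L) :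
    (A ⊔ (K : LieSubalgebra R L)).toSubmodule = A.toSubmodule ⊔ K.toSubmodule := by
  let S : LieSubalgebra R L :=
    { A.toSubmodule ⊔ K.toSubmodule with
      lie_mem' := by
        intro x y hx hy
        obtain ⟨a, ha, k, hk, rfl⟩ := Submodule.mem_sup.1 hx
        obtain ⟨b, hb, l, hl, rfl⟩ := Submodule.mem_sup.1 hy
        rw [add_lie, lie_add, add_assoc]
        exact Submodule.add_mem_sup (A.lie_mem ha hb)
          (add_mem (lie_mem_right R L K a l hl) (lie_mem_left R L K k (b + l) hk)) }
  have hS : A ⊔ (K : LieSubalgebra R L) ≤ S :=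
    sup_le (le_sup_left (a := A.toSubmodule)) (le_sup_right (b := K.toSubmodule))
  exact le_antisymm hS (sup_le (le_sup_left (a := A)) (le_sup_right (b := (K : LieSubalgebra R L))))

theorem toSubmodule_sup_eq_top_of_isCoatom {M : LieSubalgebra R L} (hM : IsCoatom M)
    {C : LieIdeal R L} (hC : ¬ (C : LieSubalgebra R L) ≤ M) :
    M.toSubmodule ⊔ C.toSubmodule = ⊤ := by
  rw [← toSubmodule_sup_toLieSubalgebra, hM.2 _ (left_lt_sup.2 hC),
    LieSubalgebra.top_toSubmodule]

theorem exists_lieIdeal_toSubmodule_eq_inf {M : LieSubalgebra R L} {C D : LieIdeal R L}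
    (hMC : M.toSubmodule ⊔ C.toSubmodule = ⊤)
    (hCD : C.toSubmodule ⊓ D.toSubmodule ≤ M.toSubmodule) :
    ∃ I : LieIdeal R L, I.toSubmodule = M.toSubmodule ⊓ D.toSubmodule := by
  refine ⟨{ M.toSubmodule ⊓ D.toSubmodule with lie_mem := ?_ }, rfl⟩
  rintro x y ⟨hyM, hyD⟩
  refine ⟨?_, lie_mem_right R L D x y hyD⟩
  obtain ⟨m, hm, c, hc, rfl⟩ := Submodule.mem_sup.1 (hMC ▸ Submodule.mem_top (x := x))
  rw [add_lie]
  exact M.add_mem (M.lie_mem hm hyM)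
    (hCD ⟨lie_mem_left R L C c y hc, lie_mem_right R L D c y hyD⟩)

theorem nonempty_quotient_equiv_inf_sup {M : LieSubalgebra R L} {C D I J : LieIdeal R L}
    (hI : I.toSubmodule = M.toSubmodule ⊓ C.toSubmodule)
    (hJ : J.toSubmodule = M.toSubmodule ⊓ D.toSubmodule)
    (hCD : C.toSubmodule ⊓ D.toSubmodule ≤ M.toSubmodule)
    (hCM : C.toSubmodule ≤ M.toSubmodule ⊔ D.toSubmodule) :
    Nonempty (((C : LieSubalgebra R L) ⧸ LieIdeal.comap (C : LieSubalgebra R L).incl I) ≃ₗ⁅R⁆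
      (M ⊓ (C ⊔ D : LieIdeal R L) : LieSubalgebra R L) ⧸
        LieIdeal.comap (M ⊓ (C ⊔ D : LieIdeal R L) : LieSubalgebra R L).incl (I ⊔ J)) := by
  have hIM : I.toSubmodule ≤ M.toSubmodule := hI.trans_le inf_le_left
  have hIC : I.toSubmodule ≤ C.toSubmodule := hI.trans_le inf_le_right
  have hinfC : C.toSubmodule ⊓ I.toSubmodule =
      C.toSubmodule ⊓ (I.toSubmodule ⊔ D.toSubmodule) := by
    have hCDI : D.toSubmodule ⊓ C.toSubmodule ≤ I.toSubmodule :=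
      hI ▸ le_inf (inf_comm D.toSubmodule _ ▸ hCD) inf_le_right
    rw [inf_comm _ (_ ⊔ _), sup_inf_assoc_of_le _ hIC, sup_eq_left.2 hCDI, inf_eq_right.2 hIC]
  have hinfM : M.toSubmodule ⊓ (C.toSubmodule ⊔ D.toSubmodule) ⊓
        (I.toSubmodule ⊔ J.toSubmodule) =
      M.toSubmodule ⊓ (C.toSubmodule ⊔ D.toSubmodule) ⊓ (I.toSubmodule ⊔ D.toSubmodule) := by
    have hmodular : I.toSubmodule ⊔ J.toSubmodule =
        M.toSubmodule ⊓ (I.toSubmodule ⊔ D.toSubmodule) := by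
      rw [inf_comm, sup_inf_assoc_of_le _ hIM, inf_comm, hJ]
    rw [hmodular, ← inf_assoc, inf_eq_left.2 (inf_le_left (a := M.toSubmodule))]
  have hsup : C.toSubmodule ⊔ (I.toSubmodule ⊔ D.toSubmodule) =
      M.toSubmodule ⊓ (C.toSubmodule ⊔ D.toSubmodule) ⊔ (I.toSubmodule ⊔ D.toSubmodule) := by
    rw [← sup_assoc, ← sup_assoc, sup_eq_left.2 hIC,
      sup_eq_left.2 (le_inf hIM (hIC.trans le_sup_left)), inf_comm,
      inf_sup_assoc_of_le _ le_sup_right, inf_eq_left.2 (sup_le hCM le_sup_right)]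
  apply nonempty_quotient_equiv_of_sup_eq (K := I ⊔ D) <;>
    simpa only [LieIdeal.toLieSubalgebra_toSubmodule, LieSubalgebra.inf_toSubmodule,
      LieSubmodule.sup_toSubmodule]

theorem nonempty_quotient_equiv_of_inf_le {M : LieSubalgebra R L} {C D I J : LieIdeal R L}
    (hI : I.toSubmodule = M.toSubmodule ⊓ C.toSubmodule)
    (hJ : J.toSubmodule = M.toSubmodule ⊓ D.toSubmodule)
    (hCD : C.toSubmodule ⊓ D.toSubmodule ≤ M.toSubmodule)
    (hCM : C.toSubmodule ≤ M.toSubmodule ⊔ D.toSubmodule)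
    (hDM : D.toSubmodule ≤ M.toSubmodule ⊔ C.toSubmodule) :
    Nonempty (((C : LieSubalgebra R L) ⧸ LieIdeal.comap (C : LieSubalgebra R L).incl I) ≃ₗ⁅R⁆
      (D : LieSubalgebra R L) ⧸ LieIdeal.comap (D : LieSubalgebra R L).incl J) := by
  obtain ⟨e⟩ := nonempty_quotient_equiv_inf_sup hI hJ hCD hCM
  obtain ⟨e'⟩ := nonempty_quotient_equiv_inf_sup hJ hI (inf_comm C.toSubmodule _ ▸ hCD) hDM
  rw [sup_comm D C, sup_comm J I] at e'
  exact ⟨e.trans e'.symm⟩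

end CommRing

section Field

variable {F L : Type*} [Field F] [LieRing L] [LieAlgebra F L]

theorem le_strictCore {B : LieSubalgebra F L} {I : LieIdeal F L}
    (hI : (I : LieSubalgebra F L) < B) : I ≤ strictCore B :=
  le_sSup hI

theorem strictCore_le {A B : LieSubalgebra F L}
    (h : ∀ I : LieIdeal F L, (I : LieSubalgebra F L) < B → (I : LieSubalgebra F L) ≤ A) :
    (strictCore B : LieSubalgebra F L) ≤ A := by
  rw [← LieSubalgebra.toSubmodule_le_toSubmodule, LieIdeal.toLieSubalgebra_toSubmodule, strictCore,
    LieSubmodule.sSup_toSubmodule_eq_iSup]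
  exact iSup₂_le h

namespace IsCompletion

variable {M : LieSubalgebra F L} {C D : LieIdeal F L}

theorem inf_le_of_ne (hC : IsCompletion M (C : LieSubalgebra F L))
    (hD : IsCompletion M (D : LieSubalgebra F L)) (hCD : C ≠ D) :
    C.toSubmodule ⊓ D.toSubmodule ≤ M.toSubmodule := by
  have hnle : ¬ C ≤ D := fun hle =>
    hC.1 (hD.2 C (lt_of_le_not_ge hle fun hge => hCD (le_antisymm hle hge)))
  exact hC.2 (C ⊓ D) (inf_lt_left.2 hnle)

theorem toSubmodule_strictCore_eq_inf (hM : IsCoatom M)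
    (hC : IsCompletion M (C : LieSubalgebra F L)) (hD : IsCompletion M (D : LieSubalgebra F L))
    (hCD : C ≠ D) :
    (strictCore (D : LieSubalgebra F L)).toSubmodule = M.toSubmodule ⊓ D.toSubmodule := by
  obtain ⟨I, hI⟩ := exists_lieIdeal_toSubmodule_eq_inf
    (toSubmodule_sup_eq_top_of_isCoatom hM hC.1) (hC.inf_le_of_ne hD hCD)
  have hID : (I : LieSubalgebra F L) < D :=
    lt_of_le_not_ge (hI.trans_le inf_le_right) fun h =>
      hD.1 (le_trans h (hI.trans_le inf_le_left))
  exact le_antisymm (le_inf (strictCore_le hD.2) (strictCore_le fun _ hJ => hJ.le))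
    (hI ▸ le_strictCore hID)

end IsCompletion

theorem statement1_general (M : LieSubalgebra F L) (hM : IsCoatom M) (C D : LieIdeal F L)
    (hC : IsCompletion M (C : LieSubalgebra F L))
    (hD : IsCompletion M (D : LieSubalgebra F L)) :
    Nonempty (quotCore (C : LieSubalgebra F L) ≃ₗ⁅F⁆ quotCore (D : LieSubalgebra F L)) := by
  rcases eq_or_ne C D with rfl | hCD
  · exact ⟨LieEquiv.refl⟩
  have hkC := hD.toSubmodule_strictCore_eq_inf hM hC hCD.symm
  have hkD := hC.toSubmodule_strictCore_eq_inf hM hD hCD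
  have hMC := toSubmodule_sup_eq_top_of_isCoatom hM hC.1
  have hMD := toSubmodule_sup_eq_top_of_isCoatom hM hD.1
  exact nonempty_quotient_equiv_of_inf_le hkC hkD (hC.inf_le_of_ne hD hCD)
    (hMD ▸ le_top) (hMC ▸ le_top)

end Field

/-- If `C` and `D` are ideal completions of the maximal subalgebra `M` of `L`,
then `C/k(C) ≅ D/k(D)`. -/
theorem statement1 {F L : Type*} [Field F] [LieRing L] [LieAlgebra F L] [FiniteDimensional F L]
    (M : LieSubalgebra F L) (hM : IsCoatom M)
    (C D : LieIdeal F L)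
    (hC : IsCompletion M (C : LieSubalgebra F L))
    (hD : IsCompletion M (D : LieSubalgebra F L)) :
    Nonempty (quotCore (C : LieSubalgebra F L) ≃ₗ⁅F⁆ quotCore (D : LieSubalgebra F L)) :=
  statement1_general M hM C D hC hD
end

section
/- Let L be a finite-dimensional Lie algebra over a field F, let M be a maximal subalgebra of L, and let B be an ideal of L with B ⊆ M. Let C/B be an ideal completion of M/B in L/B, put k(C/B) = K/B (so K is the preimage in L of the strict core of C/B), and let D be an ideal completion of M in L. Then the quotient Lie algebras C/K and D/k(D) are isomorphic. -/
/-!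
Let `M_L` be the largest ideal of `L` inside `M`. An ideal completion `D` of `M` has
`k(D) = D ∩ M_L`, and its image in `L / M_L` is a minimal ideal isomorphic to `D / k(D)`.
The preimage of `(M/B)_{L/B}` in `L` is `M_L`, so likewise `C / K` is isomorphic to a minimal ideal
of `L / M_L`. It remains to see that, when a maximal subalgebra `N` contains no nonzero ideal, two
distinct minimal ideals `I` and `J` are isomorphic. They commute, as `[I, J] ⊆ I ∩ J = 0`. Since
`N + J` is everything, `N ∩ I` is an ideal and hence zero, so `N` is a complement of `I`, and
symmetrically of `J`. Sending `a ∈ I` to the `b ∈ J` with `a + b ∈ N` is then an isomorphism.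
-/

section CommonComplement

variable {R V : Type*} [Ring R] [AddCommGroup V] [Module R V] {M A B : Submodule R V}

/-- The isomorphism between two complements `A` and `B` of the same submodule `M`, with the sign
chosen such that `a : A` corresponds to the unique `b : B` with `a + b ∈ M`. This choice makes it
compatible with Lie brackets when `A` and `B` commute and `M` is a subalgebra. -/
noncomputable def linearEquivOfCommonComplement (hA : IsCompl M A) (hB : IsCompl M B) :
    A ≃ₗ[R] B :=
  (Submodule.quotientEquivOfIsCompl M A hA).symm ≪≫ₗ
    Submodule.quotientEquivOfIsCompl M B hB ≪≫ₗ LinearEquiv.neg R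

theorem add_linearEquivOfCommonComplement_mem (hA : IsCompl M A) (hB : IsCompl M B) (a : A) :
    (a : V) + linearEquivOfCommonComplement hA hB a ∈ M := by
  have h : (Submodule.Quotient.mk (a : V) : V ⧸ M) =
      Submodule.Quotient.mk (-(linearEquivOfCommonComplement hA hB a : V)) := by
    simp only [linearEquivOfCommonComplement, LinearEquiv.trans_apply, LinearEquiv.neg_apply,
      NegMemClass.coe_neg, neg_neg, Submodule.mk_quotientEquivOfIsCompl_apply]
    exact (Submodule.quotientEquivOfIsCompl_symm_apply M A hA a).symm
  simpa using (Submodule.Quotient.eq M).1 h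

theorem linearEquivOfCommonComplement_eq_of_add_mem (hA : IsCompl M A) (hB : IsCompl M B)
    {a : A} {b : B} (hab : (a : V) + b ∈ M) : linearEquivOfCommonComplement hA hB a = b := by
  have hM : (linearEquivOfCommonComplement hA hB a - b : V) ∈ M := by
    simpa using sub_mem (add_linearEquivOfCommonComplement_mem hA hB a) hab
  exact Subtype.ext (sub_eq_zero.1
    (Submodule.disjoint_def.1 hB.disjoint _ hM (B.sub_mem (Subtype.property _) b.2)))

end CommonComplement

section Supplements

variable {R L : Type*} [CommRing R] [LieRing L] [LieAlgebra R L]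

theorem lieSubalgebra_sup_lieIdeal_toSubmodule (M : LieSubalgebra R L) (I : LieIdeal R L) :
    (M ⊔ I).toSubmodule = M.toSubmodule ⊔ I.toSubmodule := by
  refine le_antisymm ?_ (sup_le (show M ≤ M ⊔ I from le_sup_left)
    (show (I : LieSubalgebra R L) ≤ M ⊔ I from le_sup_right))
  let S : LieSubalgebra R L :=
    { M.toSubmodule ⊔ I.toSubmodule with
      lie_mem' := by
        intro x y hx hy
        obtain ⟨m, hm, i, hi, rfl⟩ := Submodule.mem_sup.1 hx
        obtain ⟨n, hn, j, hj, rfl⟩ := Submodule.mem_sup.1 hy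
        rw [add_lie, lie_add, add_assoc]
        exact Submodule.add_mem_sup (M.lie_mem hm hn)
          (add_mem (lie_mem_right R L I m j hj) (lie_mem_left R L I i (n + j) hi)) }
  have hM : M ≤ S := show M.toSubmodule ≤ M.toSubmodule ⊔ I.toSubmodule from le_sup_left
  have hI : (I : LieSubalgebra R L) ≤ S :=
    show I.toSubmodule ≤ M.toSubmodule ⊔ I.toSubmodule from le_sup_right
  exact sup_le hM hI

theorem codisjoint_toSubmodule_of_isCoatom {M : LieSubalgebra R L} (hM : IsCoatom M)
    {I : LieIdeal R L} (hI : ¬ (I : LieSubalgebra R L) ≤ M) :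
    Codisjoint M.toSubmodule I.toSubmodule := by
  have hsup : M ⊔ I = ⊤ := hM.2 _ (left_lt_sup.2 hI)
  rw [codisjoint_iff, ← lieSubalgebra_sup_lieIdeal_toSubmodule, hsup, LieSubalgebra.top_toSubmodule]

/-- Commuting subalgebras `A` and `B` with a common complement `M`, itself a subalgebra, are
isomorphic as Lie algebras through `linearEquivOfCommonComplement`. -/
noncomputable def lieEquivOfCommonComplement {M A B : LieSubalgebra R L}
    (hA : IsCompl M.toSubmodule A.toSubmodule) (hB : IsCompl M.toSubmodule B.toSubmodule)
    (hAB : ∀ a ∈ A, ∀ b ∈ B, ⁅a, b⁆ = 0) : A ≃ₗ⁅R⁆ B :=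
  { linearEquivOfCommonComplement hA hB with
    map_lie' := by
      intro a a'
      let b : B := linearEquivOfCommonComplement hA hB a
      let b' : B := linearEquivOfCommonComplement hA hB a'
      refine linearEquivOfCommonComplement_eq_of_add_mem hA hB (b := ⁅b, b'⁆) ?_
      have hM : ⁅(a : L) + b, (a' : L) + b'⁆ ∈ M :=
        M.lie_mem (add_linearEquivOfCommonComplement_mem hA hB a)
          (add_linearEquivOfCommonComplement_mem hA hB a')
      have hab' : ⁅(a : L), (b' : L)⁆ = 0 := hAB a a.2 b' b'.2
      have hba' : ⁅(b : L), (a' : L)⁆ = 0 := by rw [← lie_skew, hAB a' a'.2 b b.2, neg_zero]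
      suffices ⁅(a : L), (a' : L)⁆ + ⁅(b : L), (b' : L)⁆ ∈ M from this
      simpa [hab', hba'] using hM }

end Supplements

section Maps

variable {R L L' L'' : Type*} [CommRing R] [LieRing L] [LieAlgebra R L] [LieRing L']
  [LieAlgebra R L'] [LieRing L''] [LieAlgebra R L'']

theorem lieHom_ker_comp (g : L' →ₗ⁅R⁆ L'') (f : L →ₗ⁅R⁆ L') : (g.comp f).ker = g.ker.comap f := by
  ext x
  simp

theorem lieIdeal_map_comp (g : L' →ₗ⁅R⁆ L'') (f : L →ₗ⁅R⁆ L') (I : LieIdeal R L) :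
    I.map (g.comp f) = (I.map f).map g :=
  eq_of_forall_ge_iff fun J => by
    simp only [LieIdeal.map_le_iff_le_comap]
    rfl

variable {f : L →ₗ⁅R⁆ L'} {M : LieSubalgebra R L}

theorem lieSubalgebra_comap_map_eq_self (hfM : (f.ker : LieSubalgebra R L) ≤ M) :
    (M.map f).comap f = M :=
  LieSubalgebra.toSubmodule_injective (Submodule.comap_map_eq_self hfM)

theorem lieSubalgebra_isCoatom_map (hf : Function.Surjective f) (hM : IsCoatom M)
    (hfM : (f.ker : LieSubalgebra R L) ≤ M) : IsCoatom (M.map f) := by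
  have le_map_comap (S : LieSubalgebra R L') : S ≤ (S.comap f).map f := by
    intro y hy
    obtain ⟨x, rfl⟩ := hf y
    exact ⟨x, hy, rfl⟩
  refine ((LieSubalgebra.gc_map_comap (f := f)).toGaloisInsertion le_map_comap).isCoatom_of_image ?_
  rwa [lieSubalgebra_comap_map_eq_self hfM]

end Maps

section IdealCore

variable {F L L' : Type*} [Field F] [LieRing L] [LieAlgebra F L] [LieRing L'] [LieAlgebra F L']

theorem idealCore_le (M : LieSubalgebra F L) : (idealCore M : LieSubalgebra F L) ≤ M := by
  suffices (idealCore M).toSubmodule ≤ M.toSubmodule from this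
  rw [idealCore, LieSubmodule.sSup_toSubmodule]
  refine sSup_le ?_
  rintro _ ⟨I, hI, rfl⟩
  exact hI

theorem le_idealCore_iff {M : LieSubalgebra F L} {I : LieIdeal F L} :
    I ≤ idealCore M ↔ (I : LieSubalgebra F L) ≤ M :=
  ⟨fun h => le_trans (show (I : LieSubalgebra F L) ≤ idealCore M from h) (idealCore_le M),
    fun h => le_sSup h⟩

theorem inf_le_idealCore_of_lie_eq_bot {M : LieSubalgebra F L} {I J : LieIdeal F L}
    (hJ : Codisjoint M.toSubmodule J.toSubmodule) (hJI : ⁅J, I⁆ = ⊥) :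
    M.toSubmodule ⊓ I.toSubmodule ≤ (idealCore M).toSubmodule := by
  let K : LieIdeal F L :=
    { M.toSubmodule ⊓ I.toSubmodule with
      lie_mem := by
        rintro x y ⟨hyM, hyI⟩
        refine ⟨?_, lie_mem_right F L I x y hyI⟩
        obtain ⟨m, hm, j, hj, rfl⟩ :=
          Submodule.mem_sup.1 (show x ∈ M.toSubmodule ⊔ J.toSubmodule by simp [hJ.eq_top])
        rw [add_lie, (LieSubmodule.lie_eq_bot_iff _ _).1 hJI j hj y hyI, add_zero]
        exact M.lie_mem hm hyM }
  have hKM : (K : LieSubalgebra F L) ≤ M := fun _ hx => hx.1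
  exact le_idealCore_iff.2 hKM

theorem nonempty_lieEquiv_of_isAtom_of_idealCore_eq_bot {M : LieSubalgebra F L} (hM : IsCoatom M)
    (hcore : idealCore M = ⊥) {I J : LieIdeal F L} (hI : IsAtom I) (hJ : IsAtom J) :
    Nonempty ((I : LieSubalgebra F L) ≃ₗ⁅F⁆ (J : LieSubalgebra F L)) := by
  obtain rfl | hne := eq_or_ne I J
  · exact ⟨LieEquiv.refl⟩
  have hIJ : ⁅I, J⁆ = ⊥ := le_bot_iff.1
    ((LieSubmodule.lie_le_inf I J).trans (hI.disjoint_of_ne hJ hne).le_bot)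
  have codisjoint {A : LieIdeal F L} (hA : IsAtom A) :
      Codisjoint M.toSubmodule A.toSubmodule :=
    codisjoint_toSubmodule_of_isCoatom hM fun h =>
      hA.1 (le_bot_iff.1 (hcore ▸ le_idealCore_iff.2 h))
  have disjoint {A B : LieIdeal F L} (hB : IsAtom B) (hBA : ⁅B, A⁆ = ⊥) :
      Disjoint M.toSubmodule A.toSubmodule := by
    have h := inf_le_idealCore_of_lie_eq_bot (codisjoint hB) hBA
    rwa [hcore, LieSubmodule.bot_toSubmodule, ← disjoint_iff_inf_le] at h
  exact ⟨lieEquivOfCommonComplement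
    ⟨disjoint hJ (by rwa [LieSubmodule.lie_comm]), codisjoint hI⟩
    ⟨disjoint hI hIJ, codisjoint hJ⟩ ((LieSubmodule.lie_eq_bot_iff _ _).1 hIJ)⟩

variable {f : L →ₗ⁅F⁆ L'} {M : LieSubalgebra F L}

theorem comap_idealCore_map (hf : Function.Surjective f)
    (hfM : (f.ker : LieSubalgebra F L) ≤ M) :
    (idealCore (M.map f)).comap f = idealCore M := by
  refine le_antisymm (le_idealCore_iff.2 fun x hx => ?_)
    (LieIdeal.map_le_iff_le_comap.1 (le_idealCore_iff.2 fun y hy => ?_))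
  · have hfx : x ∈ (M.map f).comap f := idealCore_le (M.map f) hx
    rwa [lieSubalgebra_comap_map_eq_self hfM] at hfx
  · obtain ⟨x, rfl⟩ := LieIdeal.mem_map_of_surjective hf hy
    exact ⟨x, idealCore_le M x.2, rfl⟩

theorem idealCore_map_eq_bot (hf : Function.Surjective f) (hker : f.ker = idealCore M) :
    idealCore (M.map f) = ⊥ := by
  rw [eq_bot_iff]
  intro y hy
  obtain ⟨x, rfl⟩ := hf y
  rw [← LieIdeal.mem_comap, comap_idealCore_map hf (hker ▸ idealCore_le M), ← hker] at hy
  exact (LieSubmodule.mem_bot _).2 (f.mem_ker.1 hy)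

end IdealCore

section Completion

variable {F L L' : Type*} [Field F] [LieRing L] [LieAlgebra F L] [LieRing L'] [LieAlgebra F L']
  {M : LieSubalgebra F L} {C : LieIdeal F L}

theorem IsCompletion.strictCore_eq (hC : IsCompletion M (C : LieSubalgebra F L)) :
    strictCore (C : LieSubalgebra F L) = C ⊓ idealCore M := by
  have hlt : C ⊓ idealCore M < C := inf_lt_left.2 fun h => hC.1 (le_idealCore_iff.1 h)
  exact le_antisymm
    (sSup_le fun I hI => le_inf (le_of_lt hI) (le_idealCore_iff.2 (hC.2 I hI))) (le_sSup hlt)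

theorem IsCompletion.isAtom_map {f : L →ₗ⁅F⁆ L'} (hf : Function.Surjective f)
    (hker : f.ker = idealCore M) (hC : IsCompletion M (C : LieSubalgebra F L)) :
    IsAtom (C.map f) := by
  refine ⟨fun h => hC.1 ?_, fun J hJ => ?_⟩
  · rwa [LieIdeal.map_eq_bot_iff, hker, le_idealCore_iff] at h
  · have hlt : C ⊓ J.comap f < C :=
      inf_lt_left.2 fun h => hJ.not_ge (LieIdeal.map_le_iff_le_comap.2 h)
    have hle_ker : C ⊓ J.comap f ≤ f.ker := hker ▸ le_idealCore_iff.2 (hC.2 _ hlt)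
    rw [eq_bot_iff]
    intro y hy
    obtain ⟨⟨x, hx⟩, rfl⟩ := LieIdeal.mem_map_of_surjective hf (hJ.le hy)
    exact (LieSubmodule.mem_bot _).2 (f.mem_ker.1 (hle_ker ⟨hx, hy⟩))

end Completion

section Quotients

variable {F L L' : Type*} [Field F] [LieRing L] [LieAlgebra F L] [LieRing L'] [LieAlgebra F L']

theorem lieQuotMk_surjective (B : LieIdeal F L) : Function.Surjective (lieQuotMk B) :=
  LieSubmodule.Quotient.surjective_mk' B

theorem ker_lieQuotMk (B : LieIdeal F L) : (lieQuotMk B).ker = B := by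
  ext
  exact LieSubmodule.Quotient.mk_eq_zero B

theorem nonempty_quotIn_lieEquiv_map {f : L →ₗ⁅F⁆ L'} (hf : Function.Surjective f)
    {C K : LieIdeal F L} (hK : C ⊓ K = C ⊓ f.ker) :
    Nonempty (quotIn (C : LieSubalgebra F L) K ≃ₗ⁅F⁆ (C.map f : LieSubalgebra F L')) := by
  let g : (C : LieSubalgebra F L) →ₗ⁅F⁆ L' := f.comp (C : LieSubalgebra F L).incl
  have hker : LieIdeal.comap (C : LieSubalgebra F L).incl K = g.ker := by
    ext ⟨x, hx⟩
    have h := SetLike.ext_iff.1 hK x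
    simpa [g, show x ∈ C from hx] using h
  have hrange : (g.range : Set L') = C.map f := by
    ext y
    refine ⟨?_, fun hy => LieIdeal.mem_map_of_surjective hf hy⟩
    rintro ⟨x, rfl⟩
    exact LieIdeal.mem_map x.2
  unfold quotIn
  rw [hker]
  exact ⟨g.quotKerEquivRange.trans (LieEquiv.ofEq _ _ hrange)⟩

end Quotients

theorem statement2_general {F L L' : Type*} [Field F] [LieRing L] [LieAlgebra F L] [LieRing L']
    [LieAlgebra F L'] {f : L →ₗ⁅F⁆ L'} (hf : Function.Surjective f) {M : LieSubalgebra F L}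
    (hM : IsCoatom M) (hfM : (f.ker : LieSubalgebra F L) ≤ M) {C D : LieIdeal F L}
    (hC : IsCompletion (M.map f) (C.map f : LieSubalgebra F L'))
    (hD : IsCompletion M (D : LieSubalgebra F L)) :
    Nonempty (quotIn (C : LieSubalgebra F L)
        ((strictCore (C.map f : LieSubalgebra F L')).comap f) ≃ₗ⁅F⁆
      quotCore (D : LieSubalgebra F L)) := by
  let g := lieQuotMk (idealCore (M.map f))
  let h := g.comp f
  have hg : Function.Surjective g := lieQuotMk_surjective _
  have hh : Function.Surjective h := hg.comp hf
  have hg_ker : g.ker = idealCore (M.map f) := ker_lieQuotMk _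
  have hh_ker : h.ker = idealCore M := by rw [lieHom_ker_comp, hg_ker, comap_idealCore_map hf hfM]
  have hC_atom : IsAtom (C.map h) := lieIdeal_map_comp g f C ▸ hC.isAtom_map hg hg_ker
  have hC_inf : C ⊓ (strictCore (C.map f : LieSubalgebra F L')).comap f = C ⊓ h.ker := by
    rw [hC.strictCore_eq, (LieIdeal.gc_map_comap (f := f)).u_inf, ← inf_assoc,
      inf_eq_left.2 LieIdeal.comap_map_le, lieHom_ker_comp, hg_ker]
  have hD_inf : D ⊓ strictCore (D : LieSubalgebra F L) = D ⊓ h.ker := by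
    rw [hD.strictCore_eq, inf_left_idem, hh_ker]
  obtain ⟨eC⟩ := nonempty_quotIn_lieEquiv_map hh hC_inf
  obtain ⟨eD⟩ := nonempty_quotIn_lieEquiv_map hh hD_inf
  obtain ⟨e⟩ := nonempty_lieEquiv_of_isAtom_of_idealCore_eq_bot
    (lieSubalgebra_isCoatom_map hh hM (hh_ker ▸ idealCore_le M))
    (idealCore_map_eq_bot hh hh_ker) hC_atom (hD.isAtom_map hh hh_ker)
  exact ⟨eC.trans (e.trans eD.symm)⟩

/-- Let `M` be a maximal subalgebra of `L`, `B` an ideal of `L` with `B ⊆ M`.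
If `C/B` is an ideal completion of `M/B` in `L/B`, `K` is the preimage in `L` of the strict
core `k(C/B)`, and `D` is an ideal completion of `M` in `L`, then `C/K ≅ D/k(D)`. -/
theorem statement2 {F L : Type*} [Field F] [LieRing L] [LieAlgebra F L] [FiniteDimensional F L]
    (M : LieSubalgebra F L) (hM : IsCoatom M)
    (B : LieIdeal F L) (hBM : (B : LieSubalgebra F L) ≤ M)
    (C : LieIdeal F L) (hBC : B ≤ C)
    (hC : IsCompletion (M.map (lieQuotMk B))
      ((C.map (lieQuotMk B) : LieIdeal F (L ⧸ B)) : LieSubalgebra F (L ⧸ B)))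
    (K : LieIdeal F L)
    (hK : K = LieIdeal.comap (lieQuotMk B)
      (strictCore ((C.map (lieQuotMk B) : LieIdeal F (L ⧸ B)) : LieSubalgebra F (L ⧸ B))))
    (D : LieIdeal F L) (hD : IsCompletion M (D : LieSubalgebra F L)) :
    Nonempty (quotIn (C : LieSubalgebra F L) K ≃ₗ⁅F⁆ quotCore (D : LieSubalgebra F L)) := by
  subst hK
  exact statement2_general (lieQuotMk_surjective B) hM (by rwa [ker_lieQuotMk]) hC hD
end

section
/- Let L be a finite-dimensional Lie algebra over a field F, let M be a maximal subalgebra of L, and let B be an ideal of L with B ⊆ M. Then for every ideal completion C/B of M/B in L/B and every ideal completion D of M in L, dim((C/B)/k(C/B)) = dim(D/k(D)); that is, the ideal index satisfies η(L/B : M/B) = η(L : M). -/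
/-!
For an ideal completion `C` of `M`, the strict core `k(C)` is `M_L ∩ C`, where `M_L` is the largest
ideal of `L` inside `M`. If `f : L → L'` is surjective and `M` is the preimage of `M'`, then `M_L`
is the preimage of `M'_{L'}`, so `f` carries an ideal completion `C` of `M` to an ideal completion
`f(C)` of `M'` with `C / k(C) ≃ f(C) / k(f(C))`. Taking for `f` the projection onto `L / B`, it
remains to compare two ideal completions `C ≠ D` of one maximal subalgebra `M`. Minimality puts
`C ∩ D` inside `M`; then `C ∩ M` is normalised by both `M` and `D`, hence by `M + D = L`. Thus
`k(C) = C ∩ M`, and `C / k(C) ≃ (M + C) / M = L / M`, which no longer depends on `C`.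
-/

section CommRing

variable {R L L' : Type*} [CommRing R] [LieRing L] [LieAlgebra R L] [LieRing L'] [LieAlgebra R L']

theorem toSubmodule_sup_lieIdeal (M : LieSubalgebra R L) (C : LieIdeal R L) :
    (M ⊔ (C : LieSubalgebra R L)).toSubmodule = M.toSubmodule ⊔ C.toSubmodule := by
  let S : LieSubalgebra R L :=
    { M.toSubmodule ⊔ C.toSubmodule with
      lie_mem' := by
        intro x y hx hy
        obtain ⟨m, hm, c, hc, rfl⟩ := Submodule.mem_sup.mp hx
        obtain ⟨n, hn, d, hd, rfl⟩ := Submodule.mem_sup.mp hy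
        have hmn : ⁅m, n⁆ ∈ M := M.lie_mem hm hn
        have hcd : ⁅m, d⁆ + ⁅c, n + d⁆ ∈ C :=
          add_mem (C.lie_mem hd) (lie_mem_left R L C c _ hc)
        refine Submodule.mem_sup.mpr ⟨_, hmn, _, hcd, ?_⟩
        rw [add_lie, lie_add m, add_assoc] }
  have hMS : M ≤ S := le_sup_left (a := M.toSubmodule)
  have hCS : (C : LieSubalgebra R L) ≤ S := le_sup_right (b := C.toSubmodule)
  have hM : M ≤ M ⊔ (C : LieSubalgebra R L) := le_sup_left
  have hC : (C : LieSubalgebra R L) ≤ M ⊔ (C : LieSubalgebra R L) := le_sup_right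
  exact le_antisymm (sup_le hMS hCS : M ⊔ (C : LieSubalgebra R L) ≤ S) (sup_le hM hC)

theorem isCoatom_of_isCoatom_comap {f : L →ₗ⁅R⁆ L'} (hf : Function.Surjective f)
    {M : LieSubalgebra R L'} (hM : IsCoatom (M.comap f)) : IsCoatom M := by
  have le_map_comap (K : LieSubalgebra R L') : K ≤ (K.comap f).map f := by
    intro y hy
    obtain ⟨x, rfl⟩ := hf y
    exact ⟨x, hy, rfl⟩
  exact (LieSubalgebra.gc_map_comap.toGaloisInsertion le_map_comap).isCoatom_of_image hM

theorem comap_map_of_ker_le {f : L →ₗ⁅R⁆ L'} {M : LieSubalgebra R L}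
    (hM : (f.ker : LieSubalgebra R L) ≤ M) : (M.map f).comap f = M := by
  refine le_antisymm ?_ (LieSubalgebra.gc_map_comap.le_u_l M)
  rintro x ⟨y, hy, hyx : f y = f x⟩
  have hyx_mem : y - x ∈ M := hM (LieHom.mem_ker.mpr (by rw [map_sub, hyx, sub_self]))
  simpa using sub_mem (show y ∈ M from hy) hyx_mem

end CommRing

section Field

variable {F L L' : Type*} [Field F] [LieRing L] [LieAlgebra F L] [LieRing L'] [LieAlgebra F L']

theorem comap_idealCore {f : L →ₗ⁅F⁆ L'} (hf : Function.Surjective f) (M : LieSubalgebra F L') :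
    LieIdeal.comap f (idealCore M) = idealCore (M.comap f) := by
  refine le_antisymm (le_idealCore_iff.mpr fun x hx => ?_) ?_
  · exact idealCore_le M (LieIdeal.mem_comap.mp hx)
  · refine LieIdeal.map_le_iff_le_comap.mp (le_idealCore_iff.mpr fun y hy => ?_)
    obtain ⟨x, rfl⟩ := LieIdeal.mem_map_of_surjective hf hy
    exact idealCore_le (M.comap f) x.2

theorem inf_le_idealCore_of_codisjoint {M : LieSubalgebra F L} {C D : LieIdeal F L}
    (hMD : Codisjoint M (D : LieSubalgebra F L))
    (hCD : ((C ⊓ D : LieIdeal F L) : LieSubalgebra F L) ≤ M) :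
    (C : LieSubalgebra F L) ⊓ M ≤ idealCore M := by
  have hM : M ≤ ((C : LieSubalgebra F L) ⊓ M).normalizer := fun m hm =>
    (LieSubalgebra.mem_normalizer_iff _ _).mpr fun _ hy => ⟨C.lie_mem hy.1, M.lie_mem hm hy.2⟩
  have hD : (D : LieSubalgebra F L) ≤ ((C : LieSubalgebra F L) ⊓ M).normalizer := fun d hd =>
    (LieSubalgebra.mem_normalizer_iff _ _).mpr fun y hy =>
      ⟨C.lie_mem hy.1, hCD ⟨C.lie_mem hy.1, lie_mem_left F L D d y hd⟩⟩
  obtain ⟨I, hI⟩ := (LieSubalgebra.exists_lieIdeal_coe_eq_iff F _).mpr fun x y hy =>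
    (LieSubalgebra.mem_normalizer_iff _ _).mp (hMD hM hD (LieSubalgebra.mem_top x)) y hy
  have hIM : I ≤ idealCore M := le_idealCore_iff.mpr (hI.trans_le inf_le_right)
  exact hI.symm.trans_le hIM

end Field

namespace IsCompletion

variable {F L L' : Type*} [Field F] [LieRing L] [LieAlgebra F L] [LieRing L'] [LieAlgebra F L']

section

variable {M : LieSubalgebra F L} {C D : LieIdeal F L}

theorem strictCore_eq_idealCore_inf (hC : IsCompletion M (C : LieSubalgebra F L)) :
    strictCore (C : LieSubalgebra F L) = idealCore M ⊓ C := by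
  have hlt : idealCore M ⊓ C < C :=
    inf_lt_right.mpr fun hCM => hC.1 (le_idealCore_iff.mp hCM)
  refine le_antisymm (sSup_le fun I hI => ?_) (le_sSup ?_)
  · exact le_inf (le_idealCore_iff.mpr (hC.2 I hI)) hI.le
  · exact hlt

theorem nonempty_quotCore_linearEquiv_of_surjective {V : Type*} [AddCommGroup V] [Module F V]
    (hC : IsCompletion M (C : LieSubalgebra F L)) (g : (C : LieSubalgebra F L) →ₗ[F] V)
    (hg : Function.Surjective g) (hker : ∀ x, g x = 0 ↔ (x : L) ∈ idealCore M) :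
    Nonempty (quotCore (C : LieSubalgebra F L) ≃ₗ[F] V) := by
  have hcore : (LieIdeal.comap (C : LieSubalgebra F L).incl
      (strictCore (C : LieSubalgebra F L))).toSubmodule = LinearMap.ker g := by
    ext x
    rw [hC.strictCore_eq_idealCore_inf]
    exact (and_iff_left x.2).trans (hker x).symm
  exact ⟨(Submodule.quotEquivOfEq _ _ hcore).trans (g.quotKerEquivOfSurjective hg)⟩

theorem eq_or_inf_le (hC : IsCompletion M (C : LieSubalgebra F L))
    (hD : IsCompletion M (D : LieSubalgebra F L)) :
    C = D ∨ ((C ⊓ D : LieIdeal F L) : LieSubalgebra F L) ≤ M := by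
  rw [or_iff_not_imp_right]
  intro hCD
  have hC_le : C ≤ D := inf_eq_left.mp (eq_of_le_of_not_lt inf_le_left fun h => hCD (hC.2 _ h))
  have hD_le : D ≤ C := inf_eq_right.mp (eq_of_le_of_not_lt inf_le_right fun h => hCD (hD.2 _ h))
  exact le_antisymm hC_le hD_le

theorem codisjoint (hC : IsCompletion M (C : LieSubalgebra F L)) (hM : IsCoatom M) :
    Codisjoint M (C : LieSubalgebra F L) :=
  hM.not_le_iff_codisjoint.mp hC.1

theorem nonempty_quotCore_linearEquiv_quotient (hC : IsCompletion M (C : LieSubalgebra F L))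
    (hMC : Codisjoint M (C : LieSubalgebra F L)) (hMD : Codisjoint M (D : LieSubalgebra F L))
    (hCD : ((C ⊓ D : LieIdeal F L) : LieSubalgebra F L) ≤ M) :
    Nonempty (quotCore (C : LieSubalgebra F L) ≃ₗ[F] L ⧸ M.toSubmodule) := by
  refine hC.nonempty_quotCore_linearEquiv_of_surjective
    (M.toSubmodule.mkQ ∘ₗ (C : LieSubalgebra F L).toSubmodule.subtype) ?_ fun x => ?_
  · rw [← LinearMap.range_eq_top, LinearMap.range_comp, Submodule.range_subtype,
      Submodule.map_mkQ_eq_top]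
    exact (toSubmodule_sup_lieIdeal M C).symm.trans
      (congrArg LieSubalgebra.toSubmodule hMC.eq_top)
  · refine (Submodule.Quotient.mk_eq_zero _).trans ⟨fun hx => ?_, fun hx => ?_⟩
    · exact inf_le_idealCore_of_codisjoint hMD hCD ⟨x.2, hx⟩
    · exact idealCore_le M hx

theorem nonempty_quotCore_linearEquiv (hM : IsCoatom M)
    (hC : IsCompletion M (C : LieSubalgebra F L)) (hD : IsCompletion M (D : LieSubalgebra F L)) :
    Nonempty (quotCore (C : LieSubalgebra F L) ≃ₗ[F] quotCore (D : LieSubalgebra F L)) := by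
  obtain rfl | hCD := hC.eq_or_inf_le hD
  · exact ⟨LinearEquiv.refl F _⟩
  · have hMC := hC.codisjoint hM
    have hMD := hD.codisjoint hM
    obtain ⟨eC⟩ := hC.nonempty_quotCore_linearEquiv_quotient hMC hMD hCD
    obtain ⟨eD⟩ := hD.nonempty_quotCore_linearEquiv_quotient hMD hMC (inf_comm C D ▸ hCD)
    exact ⟨eC.trans eD.symm⟩

end

section

variable {f : L →ₗ⁅F⁆ L'} {M : LieSubalgebra F L'} {D : LieIdeal F L}

theorem map_of_surjective (hf : Function.Surjective f)
    (hD : IsCompletion (M.comap f) (D : LieSubalgebra F L)) :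
    IsCompletion M (LieIdeal.map f D : LieSubalgebra F L') := by
  refine ⟨fun h => hD.1 fun x hx => h (LieIdeal.mem_map hx), fun I hI => ?_⟩
  have hlt : LieIdeal.comap f I ⊓ D < D := by
    refine inf_lt_right.mpr fun hDI => hI.not_ge ?_
    exact LieIdeal.map_le_iff_le_comap.mpr hDI
  intro y hy
  obtain ⟨x, rfl⟩ := LieIdeal.mem_map_of_surjective hf (hI.le hy)
  exact hD.2 (LieIdeal.comap f I ⊓ D) hlt ⟨LieIdeal.mem_comap.mpr hy, x.2⟩

theorem nonempty_quotCore_linearEquiv_quotCore_map (hf : Function.Surjective f)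
    (hD : IsCompletion (M.comap f) (D : LieSubalgebra F L)) :
    Nonempty (quotCore (D : LieSubalgebra F L) ≃ₗ[F]
      quotCore (LieIdeal.map f D : LieSubalgebra F L')) := by
  let E := LieIdeal.map f D
  let K := LieIdeal.comap (E : LieSubalgebra F L').incl (strictCore (E : LieSubalgebra F L'))
  let fD : (D : LieSubalgebra F L) →ₗ[F] (E : LieSubalgebra F L') :=
    (f : L →ₗ[F] L').restrict (p := D.toSubmodule) (q := E.toSubmodule)
      fun _ hx => LieIdeal.mem_map hx
  have hfD : Function.Surjective fD := by
    intro y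
    obtain ⟨x, hx⟩ := LieIdeal.mem_map_of_surjective hf y.2
    exact ⟨x, Subtype.ext hx⟩
  refine hD.nonempty_quotCore_linearEquiv_of_surjective (K.toSubmodule.mkQ ∘ₗ fD)
    (K.toSubmodule.mkQ_surjective.comp hfD) fun x => ?_
  calc K.toSubmodule.mkQ (fD x) = 0
    _ ↔ f x ∈ strictCore (E : LieSubalgebra F L') := Submodule.Quotient.mk_eq_zero _
    _ ↔ f x ∈ idealCore M := by
      rw [(hD.map_of_surjective hf).strictCore_eq_idealCore_inf]
      exact and_iff_left (fD x).2
    _ ↔ (x : L) ∈ idealCore (M.comap f) := by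
      rw [← comap_idealCore hf, LieIdeal.mem_comap]

end

end IsCompletion

theorem statement3_general {F L : Type*} [Field F] [LieRing L] [LieAlgebra F L]
    (M : LieSubalgebra F L) (hM : IsCoatom M)
    (B : LieIdeal F L) (hBM : (B : LieSubalgebra F L) ≤ M)
    (Cq : LieIdeal F (L ⧸ B))
    (hCq : IsCompletion (M.map (lieQuotMk B)) (Cq : LieSubalgebra F (L ⧸ B)))
    (D : LieIdeal F L) (hD : IsCompletion M (D : LieSubalgebra F L)) :
    Nonempty (quotCore (Cq : LieSubalgebra F (L ⧸ B)) ≃ₗ[F] quotCore (D : LieSubalgebra F L)) := by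
  have hπ := lieQuotMk_surjective B
  have hM_comap : (M.map (lieQuotMk B)).comap (lieQuotMk B) = M :=
    comap_map_of_ker_le (by rwa [ker_lieQuotMk])
  rw [← hM_comap] at hM hD
  obtain ⟨e⟩ := hCq.nonempty_quotCore_linearEquiv (isCoatom_of_isCoatom_comap hπ hM)
    (hD.map_of_surjective hπ)
  obtain ⟨eD⟩ := hD.nonempty_quotCore_linearEquiv_quotCore_map hπ
  exact ⟨e.trans eD.symm⟩

/-- Let `M` be a maximal subalgebra of `L` and `B` an ideal of `L` with `B ⊆ M`.
For every ideal completion `Cq` of `M/B` in `L/B` and every ideal completion `D` of `M` in `L`,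
`dim (Cq / k(Cq)) = dim (D / k(D))`; that is, `η(L/B : M/B) = η(L : M)`. -/
theorem statement3 {F L : Type*} [Field F] [LieRing L] [LieAlgebra F L] [FiniteDimensional F L]
    (M : LieSubalgebra F L) (hM : IsCoatom M)
    (B : LieIdeal F L) (hBM : (B : LieSubalgebra F L) ≤ M)
    (Cq : LieIdeal F (L ⧸ B))
    (hCq : IsCompletion (M.map (lieQuotMk B)) (Cq : LieSubalgebra F (L ⧸ B)))
    (D : LieIdeal F L) (hD : IsCompletion M (D : LieSubalgebra F L)) :
    Module.finrank F (quotCore (Cq : LieSubalgebra F (L ⧸ B))) =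
      Module.finrank F (quotCore (D : LieSubalgebra F L)) :=
  (statement3_general M hM B hBM Cq hCq D hD).some.finrank_eq
end

section
/- Let L be a finite-dimensional Lie algebra over an algebraically closed field F and let M be a maximal subalgebra of L. If M has a maximal completion C (a maximal element of I(M) under inclusion) such that [C,C] ⊆ k(C), then M has an abelian ideal completion in L. -/
/-!
If `C = L` there is nothing to do. Otherwise the operators induced on `L ⧸ C` by `C` commute,
because `[C, C] ⊆ k(C) ⊆ C`, and so they have a common eigenvector; this makes `D = C + F x` a
subalgebra for some `x ∉ C`. By maximality `D` is not a completion of `M`, so it contains an ideal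
of `L` not contained in `M`, and a minimal such ideal `A` is a completion of `M`. Since `C` is
abelian modulo `k(C)` and of codimension one in `D`, the subalgebra `D` is metabelian modulo `k(C)`,
hence `A'' ⊆ k(C) ⊆ M`. Thus `A` is not perfect, `A'` is an ideal of `L` properly contained in `A`,
and `A' ⊆ k(A)`.
-/

theorem mem_sup_span_singleton_iff {R V : Type*} [Semiring R] [AddCommMonoid V] [Module R V]
    {W : Submodule R V} {x y : V} :
    y ∈ W ⊔ R ∙ x ↔ ∃ w ∈ W, ∃ t : R, w + t • x = y := by
  simp only [Submodule.mem_sup, Submodule.mem_span_singleton, exists_exists_eq_and]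

section AbelianExtension

variable {R L : Type*} [CommRing R] [LieRing L] [LieAlgebra R L]

theorem add_smul_lie_add_smul (c d x : L) (s t : R) :
    ⁅c + s • x, d + t • x⁆ = ⁅c, d⁆ + ⁅x, s • d - t • c⁆ := by
  simp only [add_lie, lie_add, smul_lie, lie_smul, lie_sub, lie_self, smul_zero, add_zero]
  rw [← lie_skew c x]
  module

theorem exists_lieSubalgebra_toSubmodule_eq_sup_span_singleton {C : LieSubalgebra R L} {x : L}
    (hx : ∀ c ∈ C, ⁅x, c⁆ ∈ C.toSubmodule ⊔ R ∙ x) :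
    ∃ D : LieSubalgebra R L, D.toSubmodule = C.toSubmodule ⊔ R ∙ x := by
  refine ⟨{ C.toSubmodule ⊔ R ∙ x with lie_mem' := fun {y z} hy hz => ?_ }, rfl⟩
  obtain ⟨c, hc, s, rfl⟩ := mem_sup_span_singleton_iff.mp hy
  obtain ⟨d, hd, t, rfl⟩ := mem_sup_span_singleton_iff.mp hz
  rw [add_smul_lie_add_smul]
  exact add_mem (Submodule.mem_sup_left (C.lie_mem hc hd))
    (hx _ (sub_mem (C.smul_mem s hd) (C.smul_mem t hc)))

variable {C D : LieSubalgebra R L} {K : LieIdeal R L} {x : L}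

theorem lie_mem_sup_map_ad_of_eq_sup_span_singleton (hCK : ∀ c ∈ C, ∀ d ∈ C, ⁅c, d⁆ ∈ K)
    (hD : D.toSubmodule = C.toSubmodule ⊔ R ∙ x) {p q : L} (hp : p ∈ D) (hq : q ∈ D) :
    ⁅p, q⁆ ∈ K.toSubmodule ⊔ C.toSubmodule.map (LieAlgebra.ad R L x : Module.End R L) := by
  rw [← D.mem_toSubmodule, hD] at hp hq
  obtain ⟨c, hc, s, rfl⟩ := mem_sup_span_singleton_iff.mp hp
  obtain ⟨d, hd, t, rfl⟩ := mem_sup_span_singleton_iff.mp hq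
  rw [add_smul_lie_add_smul]
  exact Submodule.add_mem_sup (hCK c hc d hd)
    ⟨s • d - t • c, sub_mem (C.smul_mem s hd) (C.smul_mem t hc), rfl⟩

theorem lie_lie_lie_mem_of_eq_sup_span_singleton (hCK : ∀ c ∈ C, ∀ d ∈ C, ⁅c, d⁆ ∈ K)
    (hD : D.toSubmodule = C.toSubmodule ⊔ R ∙ x) {c d : L} (hc : c ∈ C) (hd : d ∈ C) :
    ⁅⁅x, c⁆, ⁅x, d⁆⁆ ∈ K := by
  have lie_mem_sup : ∀ e ∈ C, ⁅x, e⁆ ∈ C.toSubmodule ⊔ R ∙ x := fun e he => by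
    have hxD : x ∈ D.toSubmodule :=
      hD ▸ Submodule.mem_sup_right (Submodule.mem_span_singleton_self x)
    have heD : e ∈ D.toSubmodule := hD ▸ Submodule.mem_sup_left he
    exact hD ▸ D.lie_mem hxD heD
  obtain ⟨u, hu, a, hxc⟩ := mem_sup_span_singleton_iff.mp (lie_mem_sup c hc)
  obtain ⟨w, hw, b, hxd⟩ := mem_sup_span_singleton_iff.mp (lie_mem_sup d hd)
  -- The Jacobi identity for `x, c, d`, read modulo `K`.
  have proportional : a • w - b • u ∈ K := by
    have jacobi : a • w - b • u = ⁅x, ⁅c, d⁆⁆ - ⁅u, d⁆ - ⁅c, w⁆ := by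
      rw [leibniz_lie, ← hxc, ← hxd, add_lie, lie_add, smul_lie, lie_smul, ← lie_skew c x,
        ← hxc, ← hxd]
      module
    rw [jacobi]
    exact sub_mem (sub_mem (lie_mem_right R L K _ _ (hCK c hc d hd)) (hCK u hu d hd))
      (hCK c hc w hw)
  rw [← hxc, ← hxd, add_smul_lie_add_smul]
  exact add_mem (hCK u hu w hw) (lie_mem_right R L K _ _ proportional)

theorem derivedSeriesOfIdeal_two_le_of_eq_sup_span_singleton (hCK : ∀ c ∈ C, ∀ d ∈ C, ⁅c, d⁆ ∈ K)
    (hD : D.toSubmodule = C.toSubmodule ⊔ R ∙ x) {A : LieIdeal R L}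
    (hA : (A : LieSubalgebra R L) ≤ D) :
    LieAlgebra.derivedSeriesOfIdeal R L 2 A ≤ K := by
  have derived_le : (⁅A, A⁆ : LieIdeal R L).toSubmodule ≤
      K.toSubmodule ⊔ C.toSubmodule.map (LieAlgebra.ad R L x : Module.End R L) := by
    rw [LieSubmodule.lieIdeal_oper_eq_linear_span', Submodule.span_le]
    rintro _ ⟨p, hp, q, hq, rfl⟩
    exact lie_mem_sup_map_ad_of_eq_sup_span_singleton hCK hD (hA hp) (hA hq)
  refine (LieSubmodule.lie_le_iff ..).mpr fun y hy z hz => ?_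
  obtain ⟨k, hk, _, ⟨c, hc, rfl⟩, rfl⟩ := Submodule.mem_sup.mp (derived_le hy)
  obtain ⟨l, hl, _, ⟨d, hd, rfl⟩, rfl⟩ := Submodule.mem_sup.mp (derived_le hz)
  rw [add_lie, lie_add (LieAlgebra.ad R L x c)]
  exact add_mem (lie_mem_left R L K _ _ hk) (add_mem (lie_mem_right R L K _ _ hl)
    (lie_lie_lie_mem_of_eq_sup_span_singleton hCK hD hc hd))

end AbelianExtension

section CommonEigenvector

attribute [local instance] LieRing.ofAssociativeRing

variable {F L : Type*} [Field F] [LieRing L] [LieAlgebra F L]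

theorem exists_nontrivial_weightSpace_of_lie_comm (V : Type*) [AddCommGroup V] [Module F V]
    [LieRingModule L V] [LieModule F L V] [FiniteDimensional F V] [Nontrivial V]
    [LieModule.IsTriangularizable F L V] (hcomm : ∀ (x y : L) (v : V), ⁅x, ⁅y, v⁆⁆ = ⁅y, ⁅x, v⁆⁆) :
    ∃ χ : L → F, Nontrivial (LieModule.weightSpace V χ) := by
  let image := (LieModule.toEnd F L V).range
  have : IsLieAbelian image := ⟨by
    rintro ⟨_, x, rfl⟩ ⟨_, y, rfl⟩
    exact Subtype.ext (LinearMap.ext fun v => sub_eq_zero.mpr (hcomm x y v))⟩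
  obtain ⟨χ, hχ⟩ := LieModule.exists_nontrivial_weightSpace_of_isNilpotent F image V
  obtain ⟨⟨v, hv⟩, hv0⟩ := exists_ne (0 : LieModule.weightSpace V χ)
  rw [LieModule.mem_weightSpace] at hv
  refine ⟨fun x => χ ⟨LieModule.toEnd F L V x, x, rfl⟩, nontrivial_of_ne ⟨v, ?_⟩ 0 ?_⟩
  · exact (LieModule.mem_weightSpace _ v).mpr fun x => hv ⟨_, x, rfl⟩
  · simpa using hv0

theorem exists_notMem_lieSubalgebra_eq_sup_span_singleton {C : LieSubalgebra F L}
    {K : LieIdeal F L} [FiniteDimensional F (L ⧸ C.toLieSubmodule)]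
    [LieModule.IsTriangularizable F C (L ⧸ C.toLieSubmodule)]
    (hKC : (K : LieSubalgebra F L) ≤ C) (hCK : ∀ c ∈ C, ∀ d ∈ C, ⁅c, d⁆ ∈ K) (hC : C ≠ ⊤) :
    ∃ x ∉ C, ∃ D : LieSubalgebra F L, D.toSubmodule = C.toSubmodule ⊔ F ∙ x := by
  have : Nontrivial (L ⧸ C.toLieSubmodule) :=
    Submodule.Quotient.nontrivial_iff.mpr (by simpa using hC)
  have hcomm : ∀ (c d : C) (v : L ⧸ C.toLieSubmodule), ⁅c, ⁅d, v⁆⁆ = ⁅d, ⁅c, v⁆⁆ := by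
    intro c d v
    obtain ⟨y, rfl⟩ := Submodule.Quotient.mk_surjective _ v
    have bracket_mem : ⁅⁅(c : L), (d : L)⁆, y⁆ ∈ K := lie_mem_left F L K _ y (hCK c c.2 d d.2)
    rw [lie_lie] at bracket_mem
    exact (Submodule.Quotient.eq _).mpr (hKC bracket_mem)
  obtain ⟨χ, hχ⟩ := exists_nontrivial_weightSpace_of_lie_comm (F := F) _ hcomm
  obtain ⟨⟨v, hv⟩, hv0⟩ := exists_ne (0 : LieModule.weightSpace (L ⧸ C.toLieSubmodule) χ)
  obtain ⟨x, rfl⟩ := Submodule.Quotient.mk_surjective _ v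
  rw [LieModule.mem_weightSpace] at hv
  refine ⟨x, fun hx => hv0 (Subtype.ext ((Submodule.Quotient.mk_eq_zero _).mpr hx)),
    exists_lieSubalgebra_toSubmodule_eq_sup_span_singleton fun c hc => ?_⟩
  have eigen : ⁅-c, x⁆ - χ (-⟨c, hc⟩) • x ∈ C := (Submodule.Quotient.eq _).mp (hv (-⟨c, hc⟩))
  exact mem_sup_span_singleton_iff.mpr ⟨_, eigen, χ (-⟨c, hc⟩), by
    rw [sub_add_cancel, neg_lie, lie_skew]⟩

end CommonEigenvector

section Completion

variable {F L : Type*} [Field F] [LieRing L] [LieAlgebra F L] {M C D : LieSubalgebra F L}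

theorem strictCore_le_iff :
    (strictCore C : LieSubalgebra F L) ≤ M ↔
      ∀ I : LieIdeal F L, (I : LieSubalgebra F L) < C → (I : LieSubalgebra F L) ≤ M := by
  refine ⟨fun h I hI y hy => h (le_sSup (a := I) hI hy), fun h => ?_⟩
  rw [← LieSubalgebra.toSubmodule_le_toSubmodule, LieIdeal.toLieSubalgebra_toSubmodule, strictCore,
    LieSubmodule.sSup_toSubmodule]
  refine sSup_le ?_
  rintro _ ⟨I, hI, rfl⟩
  exact h I hI

theorem strictCore_le_s13 (C : LieSubalgebra F L) : (strictCore C : LieSubalgebra F L) ≤ C :=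
  strictCore_le_iff.mpr fun _ hI => hI.le

theorem exists_lieIdeal_le_isCompletion [WellFoundedLT (LieIdeal F L)] {I : LieIdeal F L}
    (hI : ¬ (I : LieSubalgebra F L) ≤ M) :
    ∃ A ≤ I, IsCompletion M (A : LieSubalgebra F L) := by
  obtain ⟨A, hAI, hA⟩ := exists_minimal_le_of_wellFoundedLT
    (fun A : LieIdeal F L => ¬ (A : LieSubalgebra F L) ≤ M) I hI
  exact ⟨A, hAI, hA.prop, fun J hJ => not_not.mp (hA.not_prop_of_lt hJ)⟩

theorem IsMaxCompletion.exists_lieIdeal_lt_not_le (hC : IsMaxCompletion M C) (hCD : C < D) :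
    ∃ I : LieIdeal F L, (I : LieSubalgebra F L) < D ∧ ¬ (I : LieSubalgebra F L) ≤ M := by
  by_contra! hI
  exact hCD.ne (hC.2 D ⟨fun hDM => hC.1.1 (hCD.le.trans hDM), hI⟩ hCD.le)

theorem IsCompletion.lie_le_strictCore_of_derivedSeriesOfIdeal_le {A : LieIdeal F L}
    (hA : IsCompletion M (A : LieSubalgebra F L)) {k : ℕ}
    (hk : (LieAlgebra.derivedSeriesOfIdeal F L k A : LieSubalgebra F L) ≤ M) :
    ⁅A, A⁆ ≤ strictCore (A : LieSubalgebra F L) := by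
  rcases (LieSubmodule.lie_le_right A A).lt_or_eq with hlt | perfect
  · exact le_sSup hlt
  · have hkA : LieAlgebra.derivedSeriesOfIdeal F L k A = A :=
      Function.iterate_fixed (f := fun I : LieIdeal F L => ⁅I, I⁆) perfect k
    exact absurd (hkA ▸ hk) hA.1

end Completion

theorem statement13_general {F L : Type*} [Field F] [LieRing L] [LieAlgebra F L]
    [WellFoundedLT (LieIdeal F L)] (M C : LieSubalgebra F L)
    [FiniteDimensional F (L ⧸ C.toLieSubmodule)]
    [LieModule.IsTriangularizable F C (L ⧸ C.toLieSubmodule)]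
    (hC : IsMaxCompletion M C) (hab : ∀ x ∈ C, ∀ y ∈ C, ⁅x, y⁆ ∈ strictCore C) :
    ∃ A : LieIdeal F L, IsCompletion M (A : LieSubalgebra F L) ∧
      ⁅A, A⁆ ≤ strictCore (A : LieSubalgebra F L) := by
  obtain rfl | hCtop := eq_or_ne C ⊤
  · exact ⟨⊤, hC.1, (LieSubmodule.lie_le_iff ..).mpr fun x _ y _ => hab x trivial y trivial⟩
  obtain ⟨x, hxC, D, hD⟩ :=
    exists_notMem_lieSubalgebra_eq_sup_span_singleton (strictCore_le_s13 C) hab hCtop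
  have hCD : C.toSubmodule < D.toSubmodule := hD ▸ Submodule.lt_sup_iff_notMem.mpr hxC
  obtain ⟨I, hID, hIM⟩ := hC.exists_lieIdeal_lt_not_le hCD
  obtain ⟨A, hAI, hA⟩ := exists_lieIdeal_le_isCompletion hIM
  have hAD : (A : LieSubalgebra F L) ≤ D := le_trans hAI hID.le
  have derived_two_le : LieAlgebra.derivedSeriesOfIdeal F L 2 A ≤ strictCore C :=
    derivedSeriesOfIdeal_two_le_of_eq_sup_span_singleton hab hD hAD
  have core_le : (strictCore C : LieSubalgebra F L) ≤ M := strictCore_le_iff.mpr hC.1.2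
  exact ⟨A, hA, hA.lie_le_strictCore_of_derivedSeriesOfIdeal_le (k := 2)
    fun _ hy => core_le (derived_two_le hy)⟩

/-- Let `L` be a finite-dimensional Lie algebra over an algebraically closed
field and `M` a maximal subalgebra of `L`. If `M` has a maximal completion `C` with
`[C,C] ⊆ k(C)`, then `M` has an abelian ideal completion in `L`. -/
theorem statement13 {F L : Type*} [Field F] [IsAlgClosed F] [LieRing L] [LieAlgebra F L]
    [FiniteDimensional F L]
    (M : LieSubalgebra F L) (hM : IsCoatom M)
    (C : LieSubalgebra F L) (hC : IsMaxCompletion M C)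
    (hab : ∀ x ∈ C, ∀ y ∈ C, ⁅x, y⁆ ∈ strictCore C) :
    ∃ A : LieIdeal F L, IsCompletion M (A : LieSubalgebra F L) ∧
      ⁅A, A⁆ ≤ strictCore (A : LieSubalgebra F L) := by
  have := LieSubmodule.wellFoundedLT_of_isArtinian F L L
  exact statement13_general M C hC hab
end
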